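/- Let E be a real Banach space, F a real Hilbert space, and f : E → F a nearisometry (i.e., an ε-nearisometry for some ε ≥ 0). Then τ(f(E)) ∈ {0, 1}. -/

import Mathlib

open Filter Metric Bornology

/-- `f` is an `ε`-nearisometry on `A`. -/
def IsNearisometryOn {E F : Type*} [NormedAddCommGroup E] [NormedAddCommGroup F]
    (f : E → F) (A : Set E) (ε : ℝ) : Prop :=
  ∀ x ∈ A, ∀ y ∈ A, |‖f x - f y‖ - ‖x - y‖| ≤ ε

/-- `τ(B) = sup_{|e|=1} liminf_{|t|→∞} dist(t e, B)/|t|`. -/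
noncomputable def tauSet {F : Type*} [NormedAddCommGroup F] [NormedSpace ℝ F]
    (B : Set F) : ℝ :=
  sSup {s | ∃ e : F, ‖e‖ = 1 ∧
    s = liminf (fun t : ℝ => infDist (t • e) B / |t|) (cocompact ℝ)}

/-!
Evaluated along the scales `2 ^ k`, a nearisometry `f` into a Hilbert space satisfies the doubling
relation `f (2x) ≈ 2 f x` up to `O(√‖x‖)`, by the parallelogram law. Hence `2⁻ᵏ f (2ᵏ x)` converges
to a linear isometry `L` with `‖f x - L x‖ = O(√‖x‖ + 1)`, so that `dist (t e, f(E)) / |t|` tends to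
`dist (e, L(E))`. Thus `τ(f(E))` is the supremum over unit vectors of the distance to a subspace: it
is `0` if the subspace is dense and `1` otherwise, by Riesz's lemma. Passing to the completion of
`F` makes the limits exist, and the unit sphere of `F` is dense in that of its completion.
-/

open scoped Topology

section DistanceToSubspace

lemma infDist_le_norm_of_zero_mem {G : Type*} [SeminormedAddCommGroup G] {s : Set G}
    (hs : 0 ∈ s) (v : G) : infDist v s ≤ ‖v‖ :=
  (infDist_le_dist_of_mem hs).trans_eq (dist_zero_right v)

lemma infDist_smul_submodule {𝕜 G : Type*} [NormedField 𝕜] [SeminormedAddCommGroup G]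
    [NormedSpace 𝕜 G] (W : Submodule 𝕜 G) (c : 𝕜) (v : G) :
    infDist (c • v) W = ‖c‖ * infDist v W := by
  have hquot (w : G) : ‖W.mkQ w‖ = infDist w W := QuotientAddGroup.norm_mk (S := W.toAddSubgroup) w
  rw [← hquot, ← hquot, map_smul, norm_smul]

variable {𝕜 F G : Type*} [RCLike 𝕜] [NormedAddCommGroup F] [NormedSpace 𝕜 F]
  [NormedAddCommGroup G] [NormedSpace 𝕜 G]

lemma exists_norm_eq_one_lt_infDist {φ : F →ₗᵢ[𝕜] G} (hφ : DenseRange φ) {W : Submodule 𝕜 G}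
    (hW : ¬Dense (W : Set G)) {r : ℝ} (hr : r < 1) : ∃ e : F, ‖e‖ = 1 ∧ r < infDist (φ e) W := by
  obtain ⟨s, hrs, hs1⟩ := exists_between hr
  let U : Set G := {v | s * ‖v‖ < infDist v W}
  have hU : IsOpen U := isOpen_lt (by fun_prop) (continuous_infDist_pt _)
  have hU_nonempty : U.Nonempty := by
    obtain ⟨s', hss', hs'1⟩ := exists_between hs1
    obtain ⟨v, hv, hvW⟩ := riesz_lemma W.isClosed_topologicalClosure
      (by simpa [Dense, ← SetLike.mem_coe] using hW) hs'1
    have hv0 : 0 < ‖v‖ := norm_pos_iff.2 fun h ↦ hv (h ▸ zero_mem _)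
    refine ⟨v, (mul_lt_mul_of_pos_right hss' hv0).trans_le ?_⟩
    exact (le_infDist ⟨0, W.zero_mem⟩).2 fun w hw ↦
      (hvW w (W.le_topologicalClosure hw)).trans_eq (dist_eq_norm v w).symm
  obtain ⟨x, hx⟩ := hφ.exists_mem_open hU hU_nonempty
  replace hx : s * ‖x‖ < infDist (φ x) W := by simpa [U] using hx
  have hx0 : x ≠ 0 := by
    rintro rfl
    simp [infDist_zero_of_mem W.zero_mem] at hx
  refine ⟨(‖x‖ : 𝕜)⁻¹ • x, norm_smul_inv_norm hx0, hrs.trans ?_⟩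
  rwa [map_smul, infDist_smul_submodule, norm_inv, RCLike.norm_coe_norm,
    lt_inv_mul_iff₀' (norm_pos_iff.2 hx0)]

lemma sSup_infDist_image_sphere_eq_zero_or_one {φ : F →ₗᵢ[𝕜] G} (hφ : DenseRange φ)
    (W : Submodule 𝕜 G) :
    sSup ((fun e ↦ infDist (φ e) W) '' sphere 0 1) = 0 ∨
      sSup ((fun e ↦ infDist (φ e) W) '' sphere 0 1) = 1 := by
  by_cases hW : Dense (W : Set G)
  · refine .inl (le_antisymm (Real.sSup_nonpos ?_) (Real.sSup_nonneg ?_)) <;>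
      rintro _ ⟨e, -, rfl⟩ <;> simp [infDist_zero_of_mem_closure (hW (φ e))]
  · have hexists {r : ℝ} (hr : r < 1) :
        ∃ d ∈ (fun e ↦ infDist (φ e) W) '' sphere 0 1, r < d := by
      obtain ⟨e, he, hre⟩ := exists_norm_eq_one_lt_infDist hφ hW hr
      exact ⟨_, ⟨e, mem_sphere_zero_iff_norm.2 he, rfl⟩, hre⟩
    refine .inr (csSup_eq_of_forall_le_of_forall_lt_exists_gt ?_ ?_ fun r hr ↦ hexists hr)
    · obtain ⟨d, hd, -⟩ := hexists zero_lt_one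
      exact ⟨d, hd⟩
    · rintro _ ⟨e, he, rfl⟩
      simpa [mem_sphere_zero_iff_norm.1 he] using infDist_le_norm_of_zero_mem W.zero_mem (φ e)

end DistanceToSubspace

section AsymptoticDistance

variable {G : Type*} [NormedAddCommGroup G]

lemma abs_infDist_range_sub_infDist_range_le {α : Type*} {f g : α → G} {δ C : ℝ} (hδ0 : 0 ≤ δ)
    (hδ1 : δ ≤ 1) (hfg : ∀ a, ‖f a - g a‖ ≤ δ * ‖g a‖ + C) (hg : 0 ∈ Set.range g) (v : G) :
    |infDist v (Set.range f) - infDist v (Set.range g)| ≤ 2 * δ * ‖v‖ + C := by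
  have hα : Nonempty α := Set.range_nonempty_iff_nonempty.1 ⟨0, hg⟩
  have hgv : δ * infDist v (Set.range g) ≤ δ * ‖v‖ :=
    mul_le_mul_of_nonneg_left (infDist_le_norm_of_zero_mem hg v) hδ0
  have herr (a : α) : dist (f a) (g a) ≤ δ * (‖v‖ + dist v (g a)) + C := by
    rw [dist_eq_norm, dist_eq_norm]
    exact (hfg a).trans (by gcongr; exact norm_le_norm_add_norm_sub v (g a))
  rw [abs_sub_le_iff]
  constructor
  · suffices infDist v (Set.range f) - δ * ‖v‖ - C ≤ (1 + δ) * infDist v (Set.range g) by linarith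
    rw [← div_le_iff₀' (by positivity), le_infDist (Set.range_nonempty g)]
    rintro _ ⟨a, rfl⟩
    rw [div_le_iff₀' (by positivity)]
    linarith [infDist_le_dist_of_mem (x := v) (Set.mem_range_self (f := f) a),
      dist_triangle_right v (f a) (g a), herr a]
  · suffices (1 - δ) * infDist v (Set.range g) - δ * ‖v‖ - C ≤ infDist v (Set.range f) by linarith
    rw [le_infDist (Set.range_nonempty f)]
    rintro _ ⟨a, rfl⟩
    have hle : (1 - δ) * infDist v (Set.range g) ≤ (1 - δ) * dist v (g a) :=
      mul_le_mul_of_nonneg_left (infDist_le_dist_of_mem (Set.mem_range_self a)) (by linarith)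
    linarith [dist_triangle v (f a) (g a), herr a]

variable [NormedSpace ℝ G]

lemma tendsto_infDist_smul_range_div_abs {E : Type*} [AddCommGroup E] [Module ℝ E] {f : E → G}
    {L : E →ₗ[ℝ] G} (hfL : ∀ δ > 0, ∃ C, ∀ x, ‖f x - L x‖ ≤ δ * ‖L x‖ + C) (v : G) :
    Tendsto (fun t : ℝ ↦ infDist (t • v) (Set.range f) / |t|) (cocompact ℝ)
      (𝓝 (infDist v L.range)) := by
  have habs : Tendsto (fun t : ℝ ↦ |t|) (cocompact ℝ) atTop := tendsto_norm_cocompact_atTop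
  rw [Metric.tendsto_nhds]
  intro η hη
  obtain ⟨δ, hδη, hδ0, hδ1⟩ : ∃ δ : ℝ, 2 * δ * ‖v‖ < η ∧ 0 < δ ∧ δ ≤ 1 := by
    have hzero : Tendsto (fun δ : ℝ ↦ 2 * δ * ‖v‖) (𝓝[>] 0) (𝓝 0) :=
      (Continuous.tendsto' (by fun_prop) 0 0 (by simp)).mono_left nhdsWithin_le_nhds
    exact ((hzero.eventually_lt_const hη).and (Ioc_mem_nhdsGT zero_lt_one)).exists
  obtain ⟨C, hC⟩ := hfL δ hδ0
  have hbound : Tendsto (fun t : ℝ ↦ 2 * δ * ‖v‖ + C * |t|⁻¹) (cocompact ℝ)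
      (𝓝 (2 * δ * ‖v‖)) := by
    simpa using ((tendsto_inv_atTop_zero.comp habs).const_mul C).const_add (2 * δ * ‖v‖)
  filter_upwards [hbound.eventually_lt_const hδη, habs.eventually_gt_atTop 0] with t htη ht
  have hdiff := abs_infDist_range_sub_infDist_range_le hδ0.le hδ1 hC ⟨0, L.map_zero⟩ (t • v)
  rw [← LinearMap.coe_range, infDist_smul_submodule, norm_smul, Real.norm_eq_abs] at hdiff
  refine lt_of_le_of_lt ?_ htη
  rw [Real.dist_eq, div_sub' ht.ne', abs_div, abs_abs, div_le_iff₀ ht]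
  refine hdiff.trans_eq ?_
  field_simp

lemma tauSet_eq_sSup_image_sphere {B : Set G} {d : G → ℝ}
    (hd : ∀ e, ‖e‖ = 1 →
      Tendsto (fun t : ℝ ↦ infDist (t • e) B / |t|) (cocompact ℝ) (𝓝 (d e))) :
    tauSet B = sSup (d '' sphere 0 1) := by
  unfold tauSet
  congr 1
  ext s
  simp only [Set.mem_ofPred_eq, Set.mem_image, mem_sphere_zero_iff_norm]
  refine exists_congr fun e ↦ and_congr_right fun he ↦ ?_
  rw [(hd e he).liminf_eq, eq_comm]

end AsymptoticDistance

section Doubling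

lemma exists_tendsto_inv_pow_smul {G : Type*} [NormedAddCommGroup G] [NormedSpace ℝ G]
    [CompleteSpace G] {a : ℕ → G} {c s M : ℝ} (hc : 0 < c) (hsc : s < c)
    (ha : ∀ k, ‖a (k + 1) - c • a k‖ ≤ M * s ^ k) :
    ∃ l, Tendsto (fun k ↦ (c ^ k)⁻¹ • a k) atTop (𝓝 l) ∧ ‖a 0 - l‖ ≤ M / (c - s) := by
  set u : ℕ → G := fun k ↦ (c ^ k)⁻¹ • a k
  have hu (k : ℕ) : dist (u k) (u (k + 1)) ≤ M / c * (s / c) ^ k := by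
    have hdiff : u (k + 1) - u k = (c ^ (k + 1))⁻¹ • (a (k + 1) - c • a k) := by
      simp only [u, smul_sub, smul_smul, pow_succ]
      congr 2
      field_simp
    calc dist (u k) (u (k + 1)) = (c ^ (k + 1))⁻¹ * ‖a (k + 1) - c • a k‖ := by
          rw [dist_comm, dist_eq_norm, hdiff, norm_smul, Real.norm_of_nonneg (by positivity)]
      _ ≤ (c ^ (k + 1))⁻¹ * (M * s ^ k) := by gcongr; exact ha k
      _ = M / c * (s / c) ^ k := by rw [div_pow, pow_succ]; field_simp
  have hr : s / c < 1 := (div_lt_one hc).2 hsc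
  obtain ⟨l, hl⟩ := cauchySeq_tendsto_of_complete (cauchySeq_of_le_geometric _ _ hr hu)
  refine ⟨l, hl, ?_⟩
  have hdist := dist_le_of_le_geometric_of_tendsto₀ _ _ hr hu hl
  have hsum : M / c / (1 - s / c) = M / (c - s) := by
    rw [div_div, mul_one_sub, mul_div_cancel₀ _ hc.ne']
  simpa [u, dist_eq_norm, hsum] using hdist

lemma norm_sub_two_smul_le {G : Type*} [NormedAddCommGroup G] [InnerProductSpace ℝ G] {a b : G}
    {n ε : ℝ} (hn : 0 ≤ n) (hε : 0 ≤ ε) (ha : ‖a‖ ≤ n + ε) (hba : ‖b - a‖ ≤ n + ε)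
    (hb : 2 * n - ε ≤ ‖b‖) : ‖b - (2 : ℝ) • a‖ ≤ 4 * √(n * ε) + 2 * ε := by
  have hpar : ‖b‖ ^ 2 + ‖b - (2 : ℝ) • a‖ ^ 2 = 2 * (‖b - a‖ ^ 2 + ‖a‖ ^ 2) := by
    have h := parallelogram_law_with_norm ℝ (b - a) a
    rw [sub_add_cancel, sub_sub, ← two_smul ℝ a] at h
    linarith
  have hb_sq : 4 * n ^ 2 - 4 * n * ε ≤ ‖b‖ ^ 2 := by
    rcases le_total ε (2 * n) with h | h
    · nlinarith [pow_le_pow_left₀ (by linarith) hb 2]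
    · nlinarith [sq_nonneg ‖b‖]
  have ha_sq : ‖a‖ ^ 2 ≤ (n + ε) ^ 2 := by gcongr
  have hba_sq : ‖b - a‖ ^ 2 ≤ (n + ε) ^ 2 := by gcongr
  have hsqrt : √(n * ε) ^ 2 = n * ε := Real.sq_sqrt (by positivity)
  refine le_of_sq_le_sq ?_ (by positivity)
  nlinarith [mul_nonneg (Real.sqrt_nonneg (n * ε)) hε, mul_nonneg hn hε]

end Doubling

namespace IsNearisometryOn

variable {E F G : Type*} [NormedAddCommGroup E] [NormedAddCommGroup F] [NormedAddCommGroup G]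
  {f : E → F} {A : Set E} {ε : ℝ}

lemma nonneg (hf : IsNearisometryOn f A ε) (hA : A.Nonempty) : 0 ≤ ε := by
  obtain ⟨x, hx⟩ := hA
  simpa using hf x hx x hx

lemma isometry_comp (hf : IsNearisometryOn f A ε) {φ : F → G} (hφ : Isometry φ) :
    IsNearisometryOn (φ ∘ f) A ε := fun x hx y hy ↦ by
  simpa only [Function.comp_apply, ← dist_eq_norm, hφ.dist_eq] using hf x hx y hy

lemma sub_const (hf : IsNearisometryOn f A ε) (c : F) :
    IsNearisometryOn (fun x ↦ f x - c) A ε := fun x hx y hy ↦ by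
  simpa only [sub_sub_sub_cancel_right] using hf x hx y hy

variable [NormedSpace ℝ E]

lemma isometry_of_tendsto_inv_smul [NormedSpace ℝ F] (hf : IsNearisometryOn f Set.univ ε)
    {ι : Type*} {l : Filter ι} [l.NeBot] {c : ι → ℝ} (hc : Tendsto c l atTop) {T : E → F}
    (hT : ∀ x, Tendsto (fun i ↦ (c i)⁻¹ • f (c i • x)) l (𝓝 (T x))) : Isometry T := by
  refine Isometry.of_dist_eq fun x y ↦ ?_
  have hzero : Tendsto (fun i ↦ (c i)⁻¹ * ε) l (𝓝 0) := by
    simpa using (tendsto_inv_atTop_zero.comp hc).mul_const ε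
  rw [dist_eq_norm, dist_eq_norm]
  refine tendsto_nhds_unique ((hT x).sub (hT y)).norm ?_
  rw [tendsto_iff_norm_sub_tendsto_zero]
  refine squeeze_zero' (.of_forall fun _ ↦ norm_nonneg _) ?_ hzero
  filter_upwards [hc.eventually_gt_atTop 0] with i hi
  have hnorm : ‖x - y‖ = (c i)⁻¹ * ‖c i • x - c i • y‖ := by
    rw [← smul_sub, norm_smul, Real.norm_of_nonneg hi.le, inv_mul_cancel_left₀ hi.ne']
  have hci : 0 ≤ (c i)⁻¹ := inv_nonneg.2 hi.le
  rw [hnorm, ← smul_sub, norm_smul, Real.norm_of_nonneg hci, ← mul_sub, norm_mul,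
    Real.norm_of_nonneg hci]
  gcongr
  exact hf _ trivial _ trivial

variable [InnerProductSpace ℝ F]

lemma norm_map_two_smul_sub_le (hf : IsNearisometryOn f Set.univ ε) (hf0 : f 0 = 0) (x : E) :
    ‖f ((2 : ℝ) • x) - (2 : ℝ) • f x‖ ≤ (4 * √ε + 2 * ε) * (√‖x‖ + 1) := by
  have hε : 0 ≤ ε := hf.nonneg Set.univ_nonempty
  have hx := hf x trivial 0 trivial
  have h2x := hf ((2 : ℝ) • x) trivial 0 trivial
  have h2xx := hf ((2 : ℝ) • x) trivial x trivial
  rw [hf0, sub_zero, sub_zero, abs_sub_le_iff] at hx h2x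
  rw [two_smul, add_sub_cancel_right, ← two_smul ℝ, abs_sub_le_iff] at h2xx
  rw [norm_smul, Real.norm_ofNat] at h2x
  have hle := norm_sub_two_smul_le (norm_nonneg x) hε (a := f x) (b := f ((2 : ℝ) • x))
    (by linarith) (by linarith) (by linarith)
  rw [Real.sqrt_mul (norm_nonneg x)] at hle
  nlinarith [mul_nonneg hε (Real.sqrt_nonneg ‖x‖), Real.sqrt_nonneg ε]

variable [CompleteSpace F]

lemma exists_linearIsometry_norm_sub_le_of_map_zero (hf : IsNearisometryOn f Set.univ ε)
    (hf0 : f 0 = 0) :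
    ∃ L : E →ₗᵢ[ℝ] F, ∀ x, ‖f x - L x‖ ≤ (4 * √ε + 2 * ε) * (√‖x‖ + 1) / (2 - √2) := by
  have hε : 0 ≤ ε := hf.nonneg Set.univ_nonempty
  have hsqrt2 : √2 < 2 := by rw [Real.sqrt_lt'] <;> norm_num
  have hstep (x : E) (k : ℕ) :
      ‖f ((2 : ℝ) ^ (k + 1) • x) - (2 : ℝ) • f ((2 : ℝ) ^ k • x)‖ ≤
        (4 * √ε + 2 * ε) * (√‖x‖ + 1) * √2 ^ k := by
    have hsqrt : √‖(2 : ℝ) ^ k • x‖ = √2 ^ k * √‖x‖ := by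
      rw [norm_smul, norm_pow, Real.norm_ofNat,
        Real.sqrt_eq_iff_eq_sq (by positivity) (by positivity), mul_pow, pow_right_comm,
        Real.sq_sqrt zero_le_two, Real.sq_sqrt (norm_nonneg x)]
    rw [pow_succ', mul_smul, mul_assoc]
    refine (hf.norm_map_two_smul_sub_le hf0 _).trans ?_
    have hpow : 1 ≤ √2 ^ k := one_le_pow₀ (Real.one_le_sqrt.2 one_le_two)
    gcongr
    rw [hsqrt]
    linarith
  choose T hT hfT using fun x ↦
    exists_tendsto_inv_pow_smul (a := fun k ↦ f ((2 : ℝ) ^ k • x)) two_pos hsqrt2 (hstep x)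
  have hT_isom : Isometry T :=
    hf.isometry_of_tendsto_inv_smul (tendsto_pow_atTop_atTop_of_one_lt one_lt_two) hT
  have hT0 : T 0 = 0 := tendsto_nhds_unique (hT 0) (by simp [hf0])
  refine ⟨hT_isom.affineIsometryOfStrictConvexSpace.linearIsometry, fun x ↦ ?_⟩
  have hLT : hT_isom.affineIsometryOfStrictConvexSpace.linearIsometry x = T x := by
    simpa [hT0] using (hT_isom.affineIsometryOfStrictConvexSpace.map_vadd 0 x).symm
  simpa [hLT] using hfT x

lemma exists_linearIsometry_forall_norm_sub_le (hf : IsNearisometryOn f Set.univ ε) :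
    ∃ L : E →ₗᵢ[ℝ] F, ∀ δ > 0, ∃ C, ∀ x, ‖f x - L x‖ ≤ δ * ‖x‖ + C := by
  obtain ⟨L, hL⟩ :=
    (hf.sub_const (f 0)).exists_linearIsometry_norm_sub_le_of_map_zero (sub_self _)
  set M := (4 * √ε + 2 * ε) / (2 - √2)
  refine ⟨L, fun δ hδ ↦ ⟨M ^ 2 / (4 * δ) + M + ‖f 0‖, fun x ↦ ?_⟩⟩
  have hsqrt : M * √‖x‖ ≤ δ * ‖x‖ + M ^ 2 / (4 * δ) := by
    have hsq : δ * √‖x‖ ^ 2 + M ^ 2 / (4 * δ) - M * √‖x‖ = (2 * δ * √‖x‖ - M) ^ 2 / (4 * δ) := by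
      field_simp
      ring
    rw [Real.sq_sqrt (norm_nonneg x)] at hsq
    have : 0 ≤ (2 * δ * √‖x‖ - M) ^ 2 / (4 * δ) := by positivity
    linarith
  calc ‖f x - L x‖ = ‖(f x - f 0 - L x) + f 0‖ := by congr 1; abel
    _ ≤ ‖f x - f 0 - L x‖ + ‖f 0‖ := norm_add_le _ _
    _ ≤ M * √‖x‖ + M + ‖f 0‖ := by
      gcongr
      exact (hL x).trans_eq (by ring)
    _ ≤ δ * ‖x‖ + (M ^ 2 / (4 * δ) + M + ‖f 0‖) := by linarith

end IsNearisometryOn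

theorem tau_range_zero_or_one_general {E F : Type*} [NormedAddCommGroup E] [NormedSpace ℝ E]
    [NormedAddCommGroup F] [InnerProductSpace ℝ F] {f : E → F} {ε : ℝ}
    (hf : IsNearisometryOn f Set.univ ε) :
    tauSet (Set.range f) = 0 ∨ tauSet (Set.range f) = 1 := by
  let φ : F →ₗᵢ[ℝ] UniformSpace.Completion F := UniformSpace.Completion.toComplₗᵢ
  obtain ⟨L, hL⟩ := (hf.isometry_comp φ.isometry).exists_linearIsometry_forall_norm_sub_le
  have hlim (e : F) : Tendsto (fun t : ℝ ↦ infDist (t • e) (Set.range f) / |t|) (cocompact ℝ)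
      (𝓝 (infDist (φ e) L.toLinearMap.range)) := by
    have hinf (t : ℝ) : infDist (t • e) (Set.range f) = infDist (t • φ e) (Set.range (φ ∘ f)) := by
      rw [Set.range_comp, ← map_smul, infDist_image φ.isometry]
    simp only [hinf]
    exact tendsto_infDist_smul_range_div_abs (by simpa using hL) (φ e)
  rw [tauSet_eq_sSup_image_sphere fun e _ ↦ hlim e]
  exact sSup_infDist_image_sphere_eq_zero_or_one UniformSpace.Completion.denseRange_coe _

/-- Corollary 5.4: if `f : E → F` is a nearisometry from a Banach space to a Hilbert
space, then `τ(f(E)) ∈ {0, 1}`. -/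
theorem tau_range_zero_or_one {E F : Type*}
    [NormedAddCommGroup E] [NormedSpace ℝ E] [CompleteSpace E]
    [NormedAddCommGroup F] [InnerProductSpace ℝ F] [CompleteSpace F]
    (f : E → F) (hf : ∃ ε : ℝ, 0 ≤ ε ∧ IsNearisometryOn f Set.univ ε) :
    tauSet (Set.range f) = 0 ∨ tauSet (Set.range f) = 1 := by
  obtain ⟨ε, -, hf⟩ := hf
  exact tau_range_zero_or_one_general hf
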